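/- For all natural numbers j < n and all k, l < ω, the implication ⟨j⟩⟨n⟩^{k+l}⊤ → (⟨j⟩⟨n⟩^k)^l⊤ is derivable in GLP_ω, where ⟨n⟩^m⊤ denotes m iterated applications of ⟨n⟩ to ⊤ and (⟨j⟩⟨n⟩^k)^l⊤ denotes l iterated applications of the block ⟨j⟩⟨n⟩^k to ⊤. -/

import Mathlib

/-- Formulas of polymodal provability logic GLP: propositional variables, ⊤,
Boolean connectives, and a modality `[ξ]` for each ordinal `ξ`. -/
inductive GLPFormula : Type 1 where
  | var : ℕ → GLPFormula
  | top : GLPFormula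
  | neg : GLPFormula → GLPFormula
  | and : GLPFormula → GLPFormula → GLPFormula
  | imp : GLPFormula → GLPFormula → GLPFormula
  | box : Ordinal → GLPFormula → GLPFormula

namespace GLPFormula

/-- `⟨ξ⟩φ` abbreviates `¬[ξ]¬φ`. -/
def dia (ξ : Ordinal) (φ : GLPFormula) : GLPFormula := neg (box ξ (neg φ))

/-- Biconditional, defined from the other connectives. -/
def biimp (φ ψ : GLPFormula) : GLPFormula := and (imp φ ψ) (imp ψ φ)

/-- The set of ordinals occurring as modality indices in a formula. -/
def mods : GLPFormula → Set Ordinal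
  | var _ => ∅
  | top => ∅
  | neg φ => mods φ
  | and φ ψ => mods φ ∪ mods ψ
  | imp φ ψ => mods φ ∪ mods ψ
  | box ξ φ => insert ξ (mods φ)

end GLPFormula

/-- A propositional tautology: true under every Boolean valuation that respects
the Boolean connectives (variables and boxed formulas are treated as atoms). -/
def IsTautology (φ : GLPFormula) : Prop :=
  ∀ v : GLPFormula → Bool,
    v GLPFormula.top = true →
    (∀ ψ, v ψ.neg = !v ψ) →
    (∀ ψ χ, v (ψ.and χ) = (v ψ && v χ)) →
    (∀ ψ χ, v (ψ.imp χ) = (!v ψ || v χ)) →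
    v φ = true

/-- Derivability in GLP, with modality indices restricted to the set `S`
(`S = Set.univ` gives full GLP; `S = Set.Iio ω` gives GLP_ω). -/
inductive GLPProof (S : Set Ordinal) : GLPFormula → Prop where
  | taut {φ} : φ.mods ⊆ S → IsTautology φ → GLPProof S φ
  | distr {ξ φ ψ} : ξ ∈ S → φ.mods ⊆ S → ψ.mods ⊆ S →
      GLPProof S ((GLPFormula.box ξ (φ.imp ψ)).imp
        ((GLPFormula.box ξ φ).imp (GLPFormula.box ξ ψ)))
  | trans {ξ φ} : ξ ∈ S → φ.mods ⊆ S →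
      GLPProof S ((GLPFormula.box ξ φ).imp (GLPFormula.box ξ (GLPFormula.box ξ φ)))
  | lob {ξ φ} : ξ ∈ S → φ.mods ⊆ S →
      GLPProof S ((GLPFormula.box ξ ((GLPFormula.box ξ φ).imp φ)).imp (GLPFormula.box ξ φ))
  | negIntro {ξ ζ φ} : ξ < ζ → ξ ∈ S → ζ ∈ S → φ.mods ⊆ S →
      GLPProof S ((GLPFormula.dia ζ φ).imp (GLPFormula.dia ξ φ))
  | mono {ξ ζ φ} : ξ < ζ → ξ ∈ S → ζ ∈ S → φ.mods ⊆ S →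
      GLPProof S ((GLPFormula.dia ξ φ).imp (GLPFormula.box ζ (GLPFormula.dia ξ φ)))
  | mp {φ ψ} : GLPProof S (φ.imp ψ) → GLPProof S φ → GLPProof S ψ
  | nec {ξ φ} : ξ ∈ S → GLPProof S φ → GLPProof S (GLPFormula.box ξ φ)

/-- Derivability in full GLP (modalities indexed by all ordinals). -/
def GLPProves (φ : GLPFormula) : Prop := GLPProof Set.univ φ

/-- Derivability in GLP_ω (modalities indexed by natural numbers). -/
def GLPomegaProves (φ : GLPFormula) : Prop := GLPProof (Set.Iio Ordinal.omega0) φ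

/-- A GLP_ω formula: all modality indices are below ω. -/
def IsOmegaFormula (φ : GLPFormula) : Prop := φ.mods ⊆ Set.Iio Ordinal.omega0

/-- Conjunction of a finite list of formulas. -/
def listConj : List GLPFormula → GLPFormula
  | [] => GLPFormula.top
  | φ :: l => φ.and (listConj l)

/-- `SetProves S τ χ`: the set `τ` proves `χ`, i.e. `ψ₁ ∧ … ∧ ψₘ → χ` is
derivable for some finite list of members of `τ`. -/
def SetProves (S : Set Ordinal) (τ : Set GLPFormula) (χ : GLPFormula) : Prop :=
  ∃ l : List GLPFormula, (∀ ψ ∈ l, ψ ∈ τ) ∧ GLPProof S ((listConj l).imp χ)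

/-- The iterated consistency formulas: `Q n 0 φ = ⊤`, `Q n (k+1) φ = ⟨n⟩(φ ∧ Q n k φ)`. -/
def Q (n : Ordinal) : ℕ → GLPFormula → GLPFormula
  | 0, _ => GLPFormula.top
  | k + 1, φ => GLPFormula.dia n ((GLPFormula.and φ (Q n k φ)))

/-- `diaPow n k φ` is `⟨n⟩^k φ`, `k` iterated applications of `⟨n⟩`. -/
def diaPow (n : Ordinal) : ℕ → GLPFormula → GLPFormula
  | 0, φ => φ
  | k + 1, φ => GLPFormula.dia n (diaPow n k φ)

/-- The formula corresponding to a worm, given as its list of modality indices: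
`[] ↦ ⊤` and `γ :: A ↦ ⟨γ⟩A`. -/
def wormFormula : List Ordinal → GLPFormula
  | [] => GLPFormula.top
  | γ :: A => GLPFormula.dia γ (wormFormula A)

/-- The generalized `Q`-formula: `Q(⊤,φ) = ⊤`, `Q(⟨γ⟩A, φ) = ⟨γ⟩(φ ∧ Q(A,φ))`. -/
def QWorm : List Ordinal → GLPFormula → GLPFormula
  | [], _ => GLPFormula.top
  | γ :: A, φ => GLPFormula.dia γ (GLPFormula.and φ (QWorm A φ))

/-- `blockIter j n k l` is `(⟨j⟩⟨n⟩^k)^l⊤`: `l` iterated applications of the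
block `⟨j⟩⟨n⟩^k` to `⊤`. -/
def blockIter (j n : Ordinal) (k : ℕ) : ℕ → GLPFormula
  | 0 => GLPFormula.top
  | l + 1 => GLPFormula.dia j (diaPow n k (blockIter j n k l))

/-!
A formula `χ` with `⊢ χ → [n]χ` can be carried through any number of `⟨n⟩`s, so
`⊢ χ → (⟨n⟩^k φ → ⟨n⟩^k χ)`. For `j < n`, monotonicity makes the block formula
`B = (⟨j⟩⟨n⟩^k)^l⊤` such a `χ`. Induct on `l`: by negative introspection `⟨n⟩^{k+l+1}⊤` implies
`⟨j⟩⟨n⟩^{k+l}⊤`, hence `B`, and carrying `B` through the outermost `k` of its diamonds yields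
`⟨n⟩^k B`. Prefixing `⟨j⟩` gives the claim for `l + 1`.
-/

section Tautologies

open GLPFormula

variable (φ ψ χ : GLPFormula)

theorem isTautology_top : IsTautology top :=
  fun _ htop _ _ _ ↦ htop

theorem isTautology_imp_self : IsTautology (φ.imp φ) := by
  intro v _ _ _ himp
  simp only [himp, Bool.not_or_self]

theorem isTautology_imp_imp_self : IsTautology (φ.imp (ψ.imp φ)) := by
  intro v _ _ _ himp
  simp only [himp]
  cases v φ <;> cases v ψ <;> rfl

theorem isTautology_imp_distrib :
    IsTautology ((χ.imp (φ.imp ψ)).imp ((χ.imp φ).imp (χ.imp ψ))) := by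
  intro v _ _ _ himp
  simp only [himp]
  cases v φ <;> cases v ψ <;> cases v χ <;> rfl

theorem isTautology_contrapose : IsTautology ((φ.imp ψ).imp (ψ.neg.imp φ.neg)) := by
  intro v _ hneg _ himp
  simp only [himp, hneg]
  cases v φ <;> cases v ψ <;> rfl

end Tautologies

namespace GLPFormula

variable {S : Set Ordinal.{0}} {φ ψ : GLPFormula} {j n : Ordinal.{0}}

theorem mods_imp_subset_iff : (φ.imp ψ).mods ⊆ S ↔ φ.mods ⊆ S ∧ ψ.mods ⊆ S :=
  Set.union_subset_iff

theorem mods_box_subset_iff : (box n φ).mods ⊆ S ↔ n ∈ S ∧ φ.mods ⊆ S :=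
  Set.insert_subset_iff

theorem mods_dia_subset_iff : (dia n φ).mods ⊆ S ↔ n ∈ S ∧ φ.mods ⊆ S :=
  Set.insert_subset_iff

theorem mods_diaPow_subset (hn : n ∈ S) (hφ : φ.mods ⊆ S) (k : ℕ) : (diaPow n k φ).mods ⊆ S := by
  induction k with
  | zero => exact hφ
  | succ k ih => exact mods_dia_subset_iff.2 ⟨hn, ih⟩

theorem mods_blockIter_subset (hj : j ∈ S) (hn : n ∈ S) (k l : ℕ) :
    (blockIter j n k l).mods ⊆ S := by
  induction l with
  | zero => exact Set.empty_subset S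
  | succ l ih => exact mods_dia_subset_iff.2 ⟨hj, mods_diaPow_subset hn ih k⟩

theorem diaPow_add (n : Ordinal.{0}) (k m : ℕ) (φ : GLPFormula) :
    diaPow n (k + m) φ = diaPow n k (diaPow n m φ) := by
  induction k with
  | zero => rw [Nat.zero_add, diaPow]
  | succ k ih => rw [Nat.succ_add, diaPow, diaPow, ih]

end GLPFormula

namespace GLPProof

open GLPFormula

variable {S : Set Ordinal.{0}} {φ ψ χ : GLPFormula} {j n : Ordinal.{0}}

theorem mods_subset (h : GLPProof S φ) : φ.mods ⊆ S := by
  induction h with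
  | taut hφ _ => exact hφ
  | distr hξ hφ hψ =>
    simp only [mods_imp_subset_iff, mods_box_subset_iff]
    exact ⟨⟨hξ, hφ, hψ⟩, ⟨hξ, hφ⟩, hξ, hψ⟩
  | trans hξ hφ | lob hξ hφ =>
    simp only [mods_imp_subset_iff, mods_box_subset_iff]
    tauto
  | negIntro _ hξ hζ hφ | mono _ hξ hζ hφ =>
    simp only [mods_imp_subset_iff, mods_box_subset_iff, mods_dia_subset_iff]
    tauto
  | mp _ _ ih _ => exact (mods_imp_subset_iff.1 ih).2
  | nec hξ _ ih => exact mods_box_subset_iff.2 ⟨hξ, ih⟩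

theorem mods_left_subset (h : GLPProof S (φ.imp ψ)) : φ.mods ⊆ S :=
  (mods_imp_subset_iff.1 h.mods_subset).1

theorem mods_right_subset (h : GLPProof S (φ.imp ψ)) : ψ.mods ⊆ S :=
  (mods_imp_subset_iff.1 h.mods_subset).2

theorem top : GLPProof S GLPFormula.top :=
  taut (Set.empty_subset S) isTautology_top

theorem imp_self (hφ : φ.mods ⊆ S) : GLPProof S (φ.imp φ) :=
  taut (mods_imp_subset_iff.2 ⟨hφ, hφ⟩) (isTautology_imp_self φ)

theorem imp_imp_self (hφ : φ.mods ⊆ S) (hψ : ψ.mods ⊆ S) : GLPProof S (φ.imp (ψ.imp φ)) :=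
  taut (by simp only [mods_imp_subset_iff]; tauto) (isTautology_imp_imp_self φ ψ)

theorem imp_intro (hφ : φ.mods ⊆ S) (h : GLPProof S ψ) : GLPProof S (φ.imp ψ) :=
  mp (imp_imp_self h.mods_subset hφ) h

theorem imp_mp (h : GLPProof S (χ.imp (φ.imp ψ))) (h' : GLPProof S (χ.imp φ)) :
    GLPProof S (χ.imp ψ) := by
  have hmods := h.mods_subset
  refine mp (mp (taut ?_ (isTautology_imp_distrib φ ψ χ)) h) h'
  simp only [mods_imp_subset_iff] at hmods ⊢
  tauto

theorem imp_trans (h : GLPProof S (φ.imp ψ)) (h' : GLPProof S (ψ.imp χ)) :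
    GLPProof S (φ.imp χ) :=
  imp_mp (imp_intro h.mods_left_subset h') h

theorem imp_imp_contrapose (hφ : φ.mods ⊆ S) (hψ : ψ.mods ⊆ S) :
    GLPProof S ((φ.imp ψ).imp (ψ.neg.imp φ.neg)) :=
  taut (mods_imp_subset_iff.2
    ⟨mods_imp_subset_iff.2 ⟨hφ, hψ⟩, mods_imp_subset_iff.2 ⟨hψ, hφ⟩⟩) (isTautology_contrapose φ ψ)

theorem contrapose (h : GLPProof S (φ.imp ψ)) : GLPProof S (ψ.neg.imp φ.neg) :=
  mp (imp_imp_contrapose h.mods_left_subset h.mods_right_subset) h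

theorem imp_contrapose (h : GLPProof S (χ.imp (φ.imp ψ))) :
    GLPProof S (χ.imp (ψ.neg.imp φ.neg)) :=
  have ⟨hφ, hψ⟩ := mods_imp_subset_iff.1 h.mods_right_subset
  h.imp_trans (imp_imp_contrapose hφ hψ)

theorem box_imp_box (hn : n ∈ S) (h : GLPProof S (φ.imp ψ)) :
    GLPProof S ((box n φ).imp (box n ψ)) :=
  mp (distr hn h.mods_left_subset h.mods_right_subset) (nec hn h)

theorem dia_imp_dia (hn : n ∈ S) (h : GLPProof S (φ.imp ψ)) :
    GLPProof S ((dia n φ).imp (dia n ψ)) :=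
  (box_imp_box hn h.contrapose).contrapose

theorem imp_box_imp_box (hχ : GLPProof S (χ.imp (box n χ)))
    (h : GLPProof S (χ.imp (φ.imp ψ))) : GLPProof S (χ.imp ((box n φ).imp (box n ψ))) :=
  have ⟨hn, _⟩ := mods_box_subset_iff.1 hχ.mods_right_subset
  have ⟨hφ, hψ⟩ := mods_imp_subset_iff.1 h.mods_right_subset
  hχ.imp_trans ((box_imp_box hn h).imp_trans (distr hn hφ hψ))

theorem imp_dia_imp_dia (hχ : GLPProof S (χ.imp (box n χ)))
    (h : GLPProof S (χ.imp (φ.imp ψ))) : GLPProof S (χ.imp ((dia n φ).imp (dia n ψ))) :=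
  (imp_box_imp_box hχ h.imp_contrapose).imp_contrapose

theorem imp_diaPow_imp_diaPow (hχ : GLPProof S (χ.imp (box n χ)))
    (h : GLPProof S (χ.imp (φ.imp ψ))) (k : ℕ) :
    GLPProof S (χ.imp ((diaPow n k φ).imp (diaPow n k ψ))) := by
  induction k with
  | zero => exact h
  | succ k ih => exact imp_dia_imp_dia hχ ih

theorem diaPow_imp_diaPow_of_imp_box (hχ : GLPProof S (χ.imp (box n χ))) {k : ℕ}
    (h : GLPProof S ((diaPow n k φ).imp χ)) (hφ : φ.mods ⊆ S) :
    GLPProof S ((diaPow n k φ).imp (diaPow n k χ)) :=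
  have hcarry : GLPProof S (χ.imp ((diaPow n k φ).imp (diaPow n k χ))) :=
    imp_diaPow_imp_diaPow hχ (imp_imp_self hχ.mods_left_subset hφ) k
  (h.imp_trans hcarry).imp_mp (imp_self h.mods_left_subset)

theorem blockIter_imp_box (hj : j ∈ S) (hn : n ∈ S) (hjn : j < n) (k l : ℕ) :
    GLPProof S ((blockIter j n k l).imp (box n (blockIter j n k l))) := by
  cases l with
  | zero => exact imp_intro top.mods_subset (nec hn top)
  | succ l => exact mono hjn hj hn (mods_diaPow_subset hn (mods_blockIter_subset hj hn k l) k)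

end GLPProof

open GLPFormula in
theorem dia_iterated_to_block_general {S : Set Ordinal} {j n : Ordinal} (hj : j ∈ S) (hn : n ∈ S)
    (hjn : j < n) (k l : ℕ) :
    GLPProof S ((dia j (diaPow n (k + l) top)).imp (blockIter j n k l)) := by
  have hpow (m : ℕ) : (diaPow n m top).mods ⊆ S := mods_diaPow_subset hn GLPProof.top.mods_subset m
  induction l with
  | zero => exact .imp_intro (mods_dia_subset_iff.2 ⟨hj, hpow k⟩) .top
  | succ l ih =>
    have hblock : GLPProof S ((diaPow n (k + (l + 1)) top).imp (blockIter j n k l)) :=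
      (GLPProof.negIntro hjn hj hn (hpow (k + l))).imp_trans ih
    rw [diaPow_add] at hblock ⊢
    exact .dia_imp_dia hj <| .diaPow_imp_diaPow_of_imp_box
      (.blockIter_imp_box hj hn hjn k l) hblock (hpow (l + 1))

/-- For `j < n`, `⟨j⟩⟨n⟩^{k+l}⊤ → (⟨j⟩⟨n⟩^k)^l⊤` is derivable in GLP_ω. -/
theorem dia_iterated_to_block (j n : ℕ) (hjn : j < n) (k l : ℕ) :
    GLPomegaProves ((GLPFormula.dia (j : Ordinal)
        (diaPow (n : Ordinal) (k + l) GLPFormula.top)).imp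
      (blockIter (j : Ordinal) (n : Ordinal) k l)) :=
  dia_iterated_to_block_general (Ordinal.natCast_lt_omega0 j) (Ordinal.natCast_lt_omega0 n)
    (Nat.cast_lt.2 hjn) k l
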